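/- arXiv:1101.4522 — 2 statements merged into one kernel-verified Lean document; each statement's English description precedes it below -/
import Mathlib

section
/- For every integer n ≥ 1, E_F(α_3^{⊗n}) = n, where α_3^{⊗n} is viewed as a bipartite state on ((ℂ³)^{⊗n})_A ⊗ ((ℂ³)^{⊗n})_B by grouping the n first tensor factors on one side and the n second tensor factors on the other. (Yura's result, recovered in the paper; in particular the entanglement cost of α_3 equals 1.) -/
open scoped BigOperators
open Classical
open scoped ComplexOrder

noncomputable section

/-- Partial trace over the second tensor factor:
`(ptraceSnd M) a a' = ∑ b, M (a,b) (a',b)`. -/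
def ptraceSnd {α β : Type*} [Fintype β] (M : Matrix (α × β) (α × β) ℂ) : Matrix α α ℂ :=
  Matrix.of fun a a' => ∑ b : β, M (a, b) (a', b)

/-- Von Neumann entropy (in bits) of a matrix, via the eigenvalues of a Hermitian matrix
(with the convention `0 * log₂ 0 = 0`, automatic since `Real.logb 2 0 = 0`). -/
def vnEntropy {ι : Type*} [Fintype ι] [DecidableEq ι] (ρ : Matrix ι ι ℂ) : ℝ :=
  if h : ρ.IsHermitian then -∑ i, h.eigenvalues i * Real.logb 2 (h.eigenvalues i) else 0

/-- Entanglement of formation of a bipartite (density) matrix: the infimum of the average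
entropy of entanglement over all finite pure-state ensembles for `ρ`. -/
def EoF {α β : Type*} [Fintype α] [DecidableEq α] [Fintype β] [DecidableEq β]
    (ρ : Matrix (α × β) (α × β) ℂ) : ℝ :=
  sInf {E : ℝ | ∃ (k : ℕ) (p : Fin k → ℝ) (ψ : Fin k → (α × β → ℂ)),
    (∀ i, 0 ≤ p i) ∧ (∑ i, p i = 1) ∧
    (∀ i, ∑ x, Complex.normSq (ψ i x) = 1) ∧
    (∑ i, p i • Matrix.vecMulVec (ψ i) (star (ψ i)) = ρ) ∧
    E = ∑ i, p i * vnEntropy (ptraceSnd (Matrix.vecMulVec (ψ i) (star (ψ i))))}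

/-- The antisymmetric projector `P₂^{(d)} = (1/2)(𝟙 - F)` on `ℂ^d ⊗ ℂ^d`. -/
def asymProj (d : ℕ) : Matrix (Fin d × Fin d) (Fin d × Fin d) ℂ :=
  Matrix.of fun p q => (1 / 2 : ℂ) *
    ((if p.1 = q.1 ∧ p.2 = q.2 then 1 else 0) - (if p.1 = q.2 ∧ p.2 = q.1 then 1 else 0))

/-- The antisymmetric state `α_d = P₂^{(d)} / binom(d,2)`. -/
def antisymState (d : ℕ) : Matrix (Fin d × Fin d) (Fin d × Fin d) ℂ :=
  (1 / (Nat.choose d 2 : ℂ)) • asymProj d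

/-- `α_d^{⊗n}`, viewed as a bipartite state on `((ℂ^d)^{⊗n})_A ⊗ ((ℂ^d)^{⊗n})_B`
(the `n` first tensor factors grouped on the `A` side, the `n` second ones on the `B` side). -/
def alphaPow (d n : ℕ) :
    Matrix ((Fin n → Fin d) × (Fin n → Fin d)) ((Fin n → Fin d) × (Fin n → Fin d)) ℂ :=
  Matrix.of fun p q => ∏ i : Fin n, antisymState d (p.1 i, p.2 i) (q.1 i, q.2 i)

/-- `(P₂^{(d)})^{⊗n}`, viewed as an operator on `((ℂ^d)^{⊗n})_A ⊗ ((ℂ^d)^{⊗n})_B`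
(the `n` first tensor factors grouped on the `A` side, the `n` second ones on the `B` side). -/
def asymPow (d n : ℕ) :
    Matrix ((Fin n → Fin d) × (Fin n → Fin d)) ((Fin n → Fin d) × (Fin n → Fin d)) ℂ :=
  Matrix.of fun p q => ∏ i : Fin n, asymProj d (p.1 i, p.2 i) (q.1 i, q.2 i)

/-- The antisymmetrizer `P_k^{(d)} = (1/k!) ∑_{σ ∈ S_k} sgn(σ) U_σ` on `(ℂ^d)^{⊗k}`. -/
def asymProjK (d k : ℕ) : Matrix (Fin k → Fin d) (Fin k → Fin d) ℂ :=
  Matrix.of fun f g => (1 / (Nat.factorial k) : ℂ) *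
    ∑ σ : Equiv.Perm (Fin k), ((Equiv.Perm.sign σ : ℤ) : ℂ) * (if f = g ∘ σ then 1 else 0)

/-- Quantum conditional mutual information `I(A;B|E) = H(AE) + H(BE) - H(ABE) - H(E)`
(in bits) of a tripartite (density) matrix. -/
def condMutInfo {α β γ : Type*} [Fintype α] [DecidableEq α] [Fintype β] [DecidableEq β]
    [Fintype γ] [DecidableEq γ] (ρ : Matrix ((α × β) × γ) ((α × β) × γ) ℂ) : ℝ :=
  vnEntropy (Matrix.of fun p q : α × γ => ∑ b : β, ρ ((p.1, b), p.2) ((q.1, b), q.2))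
  + vnEntropy (Matrix.of fun p q : β × γ => ∑ a : α, ρ ((a, p.1), p.2) ((a, q.1), q.2))
  - vnEntropy ρ
  - vnEntropy (Matrix.of fun e e' : γ => ∑ a : α, ∑ b : β, ρ ((a, b), e) ((a, b), e'))

/-- Squashed entanglement: `E_sq(ρ_AB) = inf (1/2) I(A;B|E)` over all finite-dimensional
extensions `ρ_ABE` of `ρ_AB`. -/
def Esq {α β : Type*} [Fintype α] [DecidableEq α] [Fintype β] [DecidableEq β]
    (ρ : Matrix (α × β) (α × β) ℂ) : ℝ :=
  sInf {x : ℝ | ∃ (m : ℕ) (σ : Matrix ((α × β) × Fin m) ((α × β) × Fin m) ℂ),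
    σ.PosSemidef ∧ σ.trace = 1 ∧ ptraceSnd σ = ρ ∧ x = (1 / 2) * condMutInfo σ}

/-- The operator norm `‖·‖_∞` of a matrix, acting on Euclidean space. -/
def opNorm {ι : Type*} [Fintype ι] [DecidableEq ι] (M : Matrix ι ι ℂ) : ℝ :=
  ‖Matrix.toEuclideanCLM (𝕜 := ℂ) M‖

/-- A bipartite (density) matrix is separable if it is a finite convex combination of
product density matrices. -/
def IsSeparableMat {α β : Type*} [Fintype α] [Fintype β]
    (σ : Matrix (α × β) (α × β) ℂ) : Prop :=
  ∃ (k : ℕ) (p : Fin k → ℝ) (ρA : Fin k → Matrix α α ℂ) (ρB : Fin k → Matrix β β ℂ),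
    (∀ i, 0 ≤ p i) ∧ (∑ i, p i = 1) ∧
    (∀ i, (ρA i).PosSemidef) ∧ (∀ i, (ρA i).trace = 1) ∧
    (∀ i, (ρB i).PosSemidef) ∧ (∀ i, (ρB i).trace = 1) ∧
    σ = ∑ i, p i • Matrix.kroneckerMap (· * ·) (ρA i) (ρB i)

/-!
The Levi-Civita symbol divided by `√2` is an isometry `V` of `ℂ³` onto `∧²(ℂ³)`, so that
`α₃^{⊗n} = 3^{-n} W Wᴴ` with `W = V^{⊗n}`. The columns of `W` form an ensemble whose reduced
states are `2^{-n}` times projections, hence have entropy `n`. Conversely every vector of an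
ensemble of `α₃^{⊗n}` lies in its range, so it is `W φ` for some `φ`, and the purity of its reduced
state is the expectation in `φ ⊗ φ` of `(W ⊗ W)ᴴ F (W ⊗ W)`, where `F` exchanges the `A` registers
of the two copies. For a single copy this compression of `F` is half the projection onto the
symmetric subspace of `ℂ³ ⊗ ℂ³`, so the purity is at most `2^{-n}`; and the von Neumann entropy is
at least the Rényi entropy of order two, which is then at least `n`.
-/

open Matrix Kronecker

section Entropy

variable {ι : Type*} [Fintype ι] [DecidableEq ι] {ρ : Matrix ι ι ℂ}

/-- The purity `tr ρ²` of a Hermitian matrix `ρ` (the trace is then real). -/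
def purity {ι : Type*} [Fintype ι] (ρ : Matrix ι ι ℂ) : ℝ :=
  (ρ * ρ).trace.re

theorem sum_eigenvalues_eq_one (h : ρ.IsHermitian) (htr : ρ.trace = 1) :
    ∑ i, h.eigenvalues i = 1 := by
  rw [h.trace_eq_sum_eigenvalues] at htr
  exact Complex.ofReal_injective (by simpa using htr)

theorem sum_sq_eigenvalues (h : ρ.IsHermitian) : ∑ i, h.eigenvalues i ^ 2 = purity ρ := by
  have : (ρ * ρ).trace = ∑ i, (h.eigenvalues i : ℂ) ^ 2 := by
    conv_lhs =>
      rw [h.spectral_theorem, ← map_mul, Unitary.conjStarAlgAut_apply, trace_mul_cycle]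
    simp [trace, sq]
  rw [purity, this]
  norm_cast

theorem mul_log_le_mul_log_add {x r : ℝ} (hx : 0 ≤ x) (hr : 0 < r) :
    x * Real.log x ≤ x * Real.log r + (x ^ 2 / r - x) := by
  rcases hx.eq_or_lt with rfl | hx
  · simp
  · have := mul_le_mul_of_nonneg_left (Real.log_le_sub_one_of_pos (div_pos hx hr)) hx.le
    rw [Real.log_div hx.ne' hr.ne'] at this
    have hsq : x * (x / r - 1) = x ^ 2 / r - x := by ring
    linarith

theorem neg_logb_le_vnEntropy_of_purity_le (h : ρ.PosSemidef) (htr : ρ.trace = 1) {r : ℝ}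
    (hr : 0 < r) (hρ : purity ρ ≤ r) : -Real.logb 2 r ≤ vnEntropy ρ := by
  have hsum : ∑ i, h.1.eigenvalues i * Real.log (h.1.eigenvalues i) ≤ Real.log r :=
    calc
      _ ≤ ∑ i, (h.1.eigenvalues i * Real.log r +
            (h.1.eigenvalues i ^ 2 / r - h.1.eigenvalues i)) :=
          Finset.sum_le_sum fun i _ => mul_log_le_mul_log_add (h.eigenvalues_nonneg i) hr
      _ = Real.log r + (purity ρ / r - 1) := by
          rw [Finset.sum_add_distrib, Finset.sum_sub_distrib, ← Finset.sum_mul, ← Finset.sum_div,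
            sum_eigenvalues_eq_one h.1 htr, sum_sq_eigenvalues, one_mul]
      _ ≤ Real.log r := by linarith [(div_le_one hr).2 hρ]
  rw [vnEntropy, dif_pos h.1, neg_le_neg_iff]
  simp only [Real.logb, mul_div_assoc', ← Finset.sum_div]
  exact div_le_div_of_nonneg_right hsum (Real.log_nonneg one_le_two)

theorem vnEntropy_eq_neg_logb_of_mul_self (h : ρ.IsHermitian) (htr : ρ.trace = 1) {r : ℝ}
    (hρ : ρ * ρ = r • ρ) : vnEntropy ρ = -Real.logb 2 r := by
  have heig (i : ι) : h.eigenvalues i * h.eigenvalues i = r * h.eigenvalues i := by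
    have := congrArg (Unitary.conjStarAlgAut ℂ _ (star h.eigenvectorUnitary)) hρ
    rw [map_mul, ← Complex.coe_smul, map_smul, h.conjStarAlgAut_star_eigenvectorUnitary,
      diagonal_mul_diagonal] at this
    exact Complex.ofReal_injective (by simpa using congrFun₂ this i i)
  have hlog (i : ι) : h.eigenvalues i * Real.logb 2 (h.eigenvalues i) =
      h.eigenvalues i * Real.logb 2 r := by
    rcases eq_or_ne (h.eigenvalues i) 0 with h0 | h0
    · simp [h0]
    · rw [mul_right_cancel₀ h0 (heig i)]
  rw [vnEntropy, dif_pos h, Finset.sum_congr rfl fun i _ => hlog i, ← Finset.sum_mul,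
    sum_eigenvalues_eq_one h htr, one_mul]

end Entropy

section Ensembles

variable {m k : Type*} [Fintype m] [Fintype k]

theorem star_dotProduct_self_eq_one_iff {ψ : m → ℂ} :
    star ψ ⬝ᵥ ψ = 1 ↔ ∑ x, Complex.normSq (ψ x) = 1 := by
  simp only [dotProduct, Pi.star_apply, Complex.star_def, ← Complex.normSq_eq_conj_mul_self]
  norm_cast

theorem sum_vecMulVec_col {m R : Type*} [NonUnitalSemiring R] [StarRing R] (A : Matrix m k R) :
    ∑ i, vecMulVec (A.col i) (star (A.col i)) = A * Aᴴ := by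
  ext x y
  simp [Matrix.sum_apply, vecMulVec_apply, mul_apply]

theorem range_mulVecLin_self_mul_conjTranspose {R : Type*} [Field R] [PartialOrder R] [StarRing R]
    [StarOrderedRing R] (A : Matrix m k R) :
    LinearMap.range (A * Aᴴ).mulVecLin = LinearMap.range A.mulVecLin := by
  refine Submodule.eq_of_le_of_finrank_eq ?_ (rank_self_mul_conjTranspose A)
  rw [mulVecLin_mul]
  exact LinearMap.range_comp_le_range _ _

theorem mem_range_mulVecLin_of_ensemble {ρ : Matrix m m ℂ} {p : k → ℝ} {ψ : k → m → ℂ}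
    (hp : ∀ i, 0 ≤ p i) (hρ : ∑ i, p i • vecMulVec (ψ i) (star (ψ i)) = ρ) {i : k}
    (hi : p i ≠ 0) : ψ i ∈ LinearMap.range ρ.mulVecLin := by
  let A : Matrix m k ℂ := of fun x j => (√(p j) : ℂ) * ψ j x
  have hcol (j : k) : A.col j = (√(p j) : ℂ) • ψ j := rfl
  have hA : A * Aᴴ = ρ := by
    rw [← hρ, ← sum_vecMulVec_col]
    refine Finset.sum_congr rfl fun j _ => ?_
    rw [hcol, star_smul, vecMulVec_smul, smul_vecMulVec, smul_smul, Complex.star_def,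
      Complex.conj_ofReal, ← Complex.ofReal_mul, Real.mul_self_sqrt (hp j), Complex.coe_smul]
  have hmem : (√(p i) : ℂ) • ψ i ∈ LinearMap.range A.mulVecLin :=
    ⟨Pi.single i 1, by rw [mulVecLin_apply, mulVec_single_one, hcol]⟩
  have hsqrt : (√(p i) : ℂ) ≠ 0 :=
    Complex.ofReal_ne_zero.2 (Real.sqrt_ne_zero'.2 ((hp i).lt_of_ne' hi))
  rwa [Submodule.smul_mem_iff _ hsqrt, ← range_mulVecLin_self_mul_conjTranspose, hA] at hmem

end Ensembles

section ReducedState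

variable {α β γ : Type*} [Fintype β]

/-- The reduced state `tr_B |ψ⟩⟨ψ|` of a bipartite vector `ψ`. -/
def reducedState (ψ : α × β → ℂ) : Matrix α α ℂ :=
  ptraceSnd (vecMulVec ψ (star ψ))

theorem reducedState_apply (ψ : α × β → ℂ) (a a' : α) :
    reducedState ψ a a' = ∑ b, ψ (a, b) * star (ψ (a', b)) := by
  simp [reducedState, ptraceSnd, vecMulVec_apply]

theorem reducedState_eq_mul_conjTranspose (ψ : α × β → ℂ) :
    reducedState ψ = of (Function.curry ψ) * (of (Function.curry ψ))ᴴ := by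
  ext a a'
  simp [reducedState_apply, mul_apply]

theorem posSemidef_reducedState [Finite α] (ψ : α × β → ℂ) : (reducedState ψ).PosSemidef := by
  rw [reducedState_eq_mul_conjTranspose]
  exact posSemidef_self_mul_conjTranspose _

variable [Fintype α]

theorem trace_reducedState (ψ : α × β → ℂ) : (reducedState ψ).trace = star ψ ⬝ᵥ ψ := by
  simp [trace, reducedState_apply, dotProduct, Fintype.sum_prod_type, mul_comm]

theorem EoF_eq_of_optimal_ensemble [Fintype γ] [DecidableEq α] [DecidableEq β]
    {ρ : Matrix (α × β) (α × β) ℂ} {r : ℝ} {p : γ → ℝ} {ψ : γ → α × β → ℂ}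
    (hp : ∀ c, 0 ≤ p c) (hp_sum : ∑ c, p c = 1) (hψ : ∀ c, star (ψ c) ⬝ᵥ ψ c = 1)
    (hρ : ∑ c, p c • vecMulVec (ψ c) (star (ψ c)) = ρ)
    (hent : ∀ c, vnEntropy (reducedState (ψ c)) = r)
    (hle : ∀ φ ∈ LinearMap.range ρ.mulVecLin, star φ ⬝ᵥ φ = 1 →
      r ≤ vnEntropy (reducedState φ)) :
    EoF ρ = r := by
  refine IsLeast.csInf_eq ⟨?_, ?_⟩
  · let e := (Fintype.equivFin γ).symm
    refine ⟨Fintype.card γ, p ∘ e, ψ ∘ e, fun i => hp (e i), (e.sum_comp p).trans hp_sum,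
      fun i => star_dotProduct_self_eq_one_iff.1 (hψ (e i)),
      (e.sum_comp fun c => p c • vecMulVec (ψ c) (star (ψ c))).trans hρ, ?_⟩
    calc
      r = ∑ i, p (e i) * r := by rw [← Finset.sum_mul, e.sum_comp p, hp_sum, one_mul]
      _ = _ := Finset.sum_congr rfl fun i _ => congrArg (p (e i) * ·) (hent (e i)).symm
  · rintro _ ⟨k, q, φ, hq, hq_sum, hφ, hφρ, rfl⟩
    calc
      r = ∑ i, q i * r := by rw [← Finset.sum_mul, hq_sum, one_mul]
      _ ≤ _ := Finset.sum_le_sum fun i _ => ?_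
    rcases eq_or_ne (q i) 0 with hi | hi
    · simp [hi]
    · exact mul_le_mul_of_nonneg_left (hle _ (mem_range_mulVecLin_of_ensemble hq hφρ hi)
        (star_dotProduct_self_eq_one_iff.2 (hφ i))) (hq i)

end ReducedState

section SwapCompression

variable {α β γ R : Type*}

/-- The exchange of the `A` registers of two copies of a bipartite system `AB`. -/
def swapFst (x : (α × β) × (α × β)) : (α × β) × (α × β) :=
  ((x.2.1, x.1.2), (x.1.1, x.2.2))

theorem swapFst_involutive : Function.Involutive (swapFst : (α × β) × (α × β) → _) :=
  fun _ => rfl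

section StarRing

variable [Fintype α] [Fintype β] [CommSemiring R] [StarRing R]

/-- The compression `(V ⊗ V)ᴴ F (V ⊗ V)` of the operator `F` exchanging the `A` registers of two
copies of `AB`, for `V : ℂ^γ → ℂ^α ⊗ ℂ^β`.  As `F` is a permutation matrix, it is encoded as a
permutation of the rows of `V ⊗ V`. -/
def swapCompression (V : Matrix (α × β) γ R) : Matrix (γ × γ) (γ × γ) R :=
  (V ⊗ₖ V)ᴴ * (V ⊗ₖ V).submatrix swapFst id

theorem isHermitian_swapCompression (V : Matrix (α × β) γ R) :
    (swapCompression V).IsHermitian := by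
  let e := swapFst_involutive.toPerm (swapFst : (α × β) × (α × β) → _)
  have h := submatrix_mul_equiv ((V ⊗ₖ V)ᴴ.submatrix id e) (V ⊗ₖ V) id e id
  rw [IsHermitian, swapCompression, conjTranspose_mul, conjTranspose_conjTranspose,
    conjTranspose_submatrix]
  exact h.symm

theorem star_dotProduct_mul_self [Fintype γ] (φ : γ → R) :
    star (fun q : γ × γ => φ q.1 * φ q.2) ⬝ᵥ (fun q => φ q.1 * φ q.2) = (star φ ⬝ᵥ φ) ^ 2 := by
  simp only [dotProduct, Fintype.sum_prod_type, sq, Finset.sum_mul_sum]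
  exact Finset.sum_congr rfl fun _ _ => Finset.sum_congr rfl fun _ _ => by
    simp only [Pi.star_apply, star_mul']
    ring

end StarRing

theorem kronecker_mulVec_mul {l m l' m' R : Type*} [CommSemiring R] [Fintype m]
    [Fintype m'] (A : Matrix l m R) (B : Matrix l' m' R) (x : m → R) (y : m' → R) :
    (A ⊗ₖ B) *ᵥ (fun q => x q.1 * y q.2) = fun q => (A *ᵥ x) q.1 * (B *ᵥ y) q.2 := by
  ext q
  simp only [mulVec, dotProduct, kroneckerMap_apply, Fintype.sum_prod_type, Finset.sum_mul_sum]
  exact Finset.sum_congr rfl fun _ _ => Finset.sum_congr rfl fun _ _ => by ring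

theorem posSemidef_smul_one_sub_of_mul_self {γ 𝕜 : Type*} [Fintype γ] [DecidableEq γ] [RCLike 𝕜]
    {S : Matrix γ γ 𝕜} (hS : S.IsHermitian) {r : ℝ} (hr : 0 < r) (hSS : S * S = r • S) :
    (r • 1 - S).PosSemidef := by
  have hsq : r • 1 - S = r⁻¹ • ((r • 1 - S)ᴴ * (r • 1 - S)) := by
    simp only [conjTranspose_sub, conjTranspose_smul, conjTranspose_one, hS.eq, sub_mul, mul_sub,
      hSS, star_trivial]
    simp [smul_sub, smul_smul, hr.ne']
  rw [hsq]
  exact (posSemidef_conjTranspose_mul_self _).smul (inv_pos.2 hr).le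

variable [Fintype α] [Fintype β] [Fintype γ]

theorem purity_reducedState (ψ : α × β → ℂ) :
    purity (reducedState ψ) =
      (star (fun x : (α × β) × (α × β) => ψ x.1 * ψ x.2) ⬝ᵥ
        fun x => ψ (swapFst x).1 * ψ (swapFst x).2).re := by
  have h : (reducedState ψ * reducedState ψ).trace =
      ∑ a', ∑ a, ∑ b, ∑ b', star (ψ (a, b) * ψ (a', b')) * (ψ (a', b) * ψ (a, b')) := by
    simp only [trace, diag_apply, mul_apply, reducedState_apply, Finset.sum_mul_sum, star_mul']
    exact Finset.sum_congr rfl fun _ _ => Finset.sum_congr rfl fun _ _ =>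
      Finset.sum_congr rfl fun _ _ => Finset.sum_congr rfl fun _ _ => by ring
  rw [purity, h, Finset.sum_comm]
  simp only [dotProduct, Fintype.sum_prod_type, Pi.star_apply, swapFst]
  exact congrArg _ (Finset.sum_congr rfl fun _ _ => Finset.sum_comm)

theorem purity_reducedState_mulVec (V : Matrix (α × β) γ ℂ) (φ : γ → ℂ) :
    purity (reducedState (V *ᵥ φ)) =
      (star (fun q : γ × γ => φ q.1 * φ q.2) ⬝ᵥ
        swapCompression V *ᵥ fun q : γ × γ => φ q.1 * φ q.2).re := by
  rw [purity_reducedState, swapCompression, ← mulVec_mulVec, dotProduct_mulVec, ← star_mulVec,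
    kronecker_mulVec_mul]
  congr 2
  ext x
  exact (congrFun (kronecker_mulVec_mul V V φ φ) (swapFst x)).symm

theorem purity_reducedState_mulVec_le {V : Matrix (α × β) γ ℂ} {r : ℝ} (hr : 0 < r)
    (hV : swapCompression V * swapCompression V = r • swapCompression V) {φ : γ → ℂ}
    (hφ : star φ ⬝ᵥ φ = 1) : purity (reducedState (V *ᵥ φ)) ≤ r := by
  have h := (posSemidef_smul_one_sub_of_mul_self (isHermitian_swapCompression V) hr hV)
    |>.re_dotProduct_nonneg fun q => φ q.1 * φ q.2
  rw [sub_mulVec, dotProduct_sub, smul_mulVec, one_mulVec, dotProduct_smul,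
    star_dotProduct_mul_self, hφ] at h
  rw [purity_reducedState_mulVec]
  simpa using h

theorem EoF_smul_mul_conjTranspose [DecidableEq α] [DecidableEq β] [DecidableEq γ] [Nonempty γ]
    {V : Matrix (α × β) γ ℂ} {r : ℝ} (hr : 0 < r) (hV : Vᴴ * V = 1)
    (hswap : swapCompression V * swapCompression V = r • swapCompression V)
    (hcol : ∀ c, reducedState (V.col c) * reducedState (V.col c) =
      r • reducedState (V.col c)) :
    EoF ((Fintype.card γ : ℝ)⁻¹ • (V * Vᴴ)) = -Real.logb 2 r := by
  have hnorm (φ : γ → ℂ) : star (V *ᵥ φ) ⬝ᵥ V *ᵥ φ = star φ ⬝ᵥ φ := by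
    rw [star_mulVec, dotProduct_mulVec, vecMul_vecMul, hV, vecMul_one]
  have hcol_norm (c : γ) : star (V.col c) ⬝ᵥ V.col c = 1 := by
    rw [← mulVec_single_one, hnorm]
    simp
  refine EoF_eq_of_optimal_ensemble (p := fun _ => (Fintype.card γ : ℝ)⁻¹) (ψ := V.col)
    (fun _ => by positivity) (by simp) hcol_norm (by rw [← Finset.smul_sum, sum_vecMulVec_col])
    (fun c => ?_) ?_
  · exact vnEntropy_eq_neg_logb_of_mul_self (posSemidef_reducedState _).1
      ((trace_reducedState _).trans (hcol_norm c)) (hcol c)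
  · rintro _ ⟨w, rfl⟩ hunit
    obtain ⟨φ, hφ⟩ : ∃ φ, V *ᵥ φ = ((Fintype.card γ : ℝ)⁻¹ • (V * Vᴴ)) *ᵥ w :=
      ⟨(Fintype.card γ : ℝ)⁻¹ • Vᴴ *ᵥ w, by rw [mulVec_smul, mulVec_mulVec, smul_mulVec]⟩
    rw [mulVecLin_apply, ← hφ] at hunit ⊢
    exact neg_logb_le_vnEntropy_of_purity_le (posSemidef_reducedState _)
      ((trace_reducedState _).trans hunit) hr
      (purity_reducedState_mulVec_le hr hswap ((hnorm φ).symm.trans hunit))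

end SwapCompression

section TensorPower

variable {ι : Type*} [Fintype ι] {R : Type*} [CommSemiring R]

/-- The Kronecker product `⨂ i, M i` of a finite family of matrices. -/
def piKronecker {α β : ι → Type*} (M : ∀ i, Matrix (α i) (β i) R) :
    Matrix (∀ i, α i) (∀ i, β i) R :=
  of fun f g => ∏ i, M i (f i) (g i)

theorem piKronecker_mul_piKronecker [DecidableEq ι] {α β γ : ι → Type*} [∀ i, Fintype (β i)]
    (M : ∀ i, Matrix (α i) (β i) R) (N : ∀ i, Matrix (β i) (γ i) R) :
    piKronecker M * piKronecker N = piKronecker fun i => M i * N i := by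
  ext f g
  simp only [piKronecker, mul_apply, of_apply, ← Finset.prod_mul_distrib, Fintype.prod_sum]

theorem piKronecker_smul {S : Type*} [CommSemiring S] [Algebra S R] {α β : ι → Type*}
    (r : S) (M : ∀ i, Matrix (α i) (β i) R) :
    piKronecker (fun i => r • M i) = r ^ Fintype.card ι • piKronecker M := by
  ext f g
  simp [piKronecker, Algebra.smul_def, Finset.prod_mul_distrib]

theorem piKronecker_one {α : ι → Type*} [∀ i, DecidableEq (α i)] :
    piKronecker (fun i => (1 : Matrix (α i) (α i) R)) = 1 := by
  ext f g
  simp [piKronecker, one_apply, Finset.prod_ite_zero, funext_iff]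

theorem conjTranspose_piKronecker [StarRing R] {α β : ι → Type*}
    (M : ∀ i, Matrix (α i) (β i) R) : (piKronecker M)ᴴ = piKronecker fun i => (M i)ᴴ := by
  ext f g
  simp [piKronecker]

variable {α β γ : Type*}

/-- The tensor power `V^{⊗ι} : (ℂ^γ)^{⊗ι} → (ℂ^α)^{⊗ι} ⊗ (ℂ^β)^{⊗ι}` of an operator
`V : ℂ^γ → ℂ^α ⊗ ℂ^β`, with the `A` factors and the `B` factors grouped together. -/
def bipartitePow (ι : Type*) [Fintype ι] (V : Matrix (α × β) γ R) :
    Matrix ((ι → α) × (ι → β)) (ι → γ) R :=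
  (piKronecker fun _ : ι => V).submatrix (Equiv.arrowProdEquivProdArrow ι _ _).symm id

section StarRing

variable [DecidableEq ι] [StarRing R]

theorem bipartitePow_mul_conjTranspose [Fintype γ] (V : Matrix (α × β) γ R) :
    bipartitePow ι V * (bipartitePow ι V)ᴴ =
      (piKronecker fun _ : ι => V * Vᴴ).submatrix (Equiv.arrowProdEquivProdArrow ι _ _).symm
        (Equiv.arrowProdEquivProdArrow ι _ _).symm := by
  rw [← piKronecker_mul_piKronecker, ← conjTranspose_piKronecker]
  rfl

variable [Fintype α] [Fintype β]

theorem conjTranspose_bipartitePow_mul_self [DecidableEq γ] {V : Matrix (α × β) γ R}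
    (hV : Vᴴ * V = 1) : (bipartitePow ι V)ᴴ * bipartitePow ι V = 1 := by
  rw [bipartitePow, conjTranspose_submatrix, submatrix_mul_equiv, conjTranspose_piKronecker,
    piKronecker_mul_piKronecker, hV, piKronecker_one, submatrix_id_id]

/-- The identification of two copies of the grouped system `A^ι B^ι` with `ι` copies of the
doubled system `ABAB`. -/
def pairCopies (ι α β : Type*) :
    ((ι → α) × (ι → β)) × ((ι → α) × (ι → β)) ≃ (ι → (α × β) × (α × β)) :=
  ((Equiv.arrowProdEquivProdArrow ι _ _).symm.prodCongr
    (Equiv.arrowProdEquivProdArrow ι _ _).symm).trans (Equiv.arrowProdEquivProdArrow ι _ _).symm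

theorem swapCompression_bipartitePow (V : Matrix (α × β) γ R) :
    swapCompression (bipartitePow ι V) =
      (piKronecker fun _ : ι => swapCompression V).submatrix
        (Equiv.arrowProdEquivProdArrow ι _ _).symm (Equiv.arrowProdEquivProdArrow ι _ _).symm := by
  have hkron : bipartitePow ι V ⊗ₖ bipartitePow ι V =
      (piKronecker fun _ : ι => V ⊗ₖ V).submatrix (pairCopies ι α β)
        (Equiv.arrowProdEquivProdArrow ι _ _).symm := by
    ext x c
    exact Finset.prod_mul_distrib.symm
  have hswap : (bipartitePow ι V ⊗ₖ bipartitePow ι V).submatrix swapFst id =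
      (piKronecker fun _ : ι => (V ⊗ₖ V).submatrix swapFst id).submatrix (pairCopies ι α β)
        (Equiv.arrowProdEquivProdArrow ι _ _).symm := by
    rw [hkron]
    rfl
  rw [swapCompression, hswap, hkron, conjTranspose_submatrix, submatrix_mul_equiv,
    conjTranspose_piKronecker, piKronecker_mul_piKronecker]
  rfl

theorem swapCompression_bipartitePow_mul_self {S : Type*} [CommSemiring S] [Algebra S R]
    [Fintype γ] {V : Matrix (α × β) γ R} {r : S}
    (hV : swapCompression V * swapCompression V = r • swapCompression V) :
    swapCompression (bipartitePow ι V) * swapCompression (bipartitePow ι V) =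
      r ^ Fintype.card ι • swapCompression (bipartitePow ι V) := by
  rw [swapCompression_bipartitePow, submatrix_mul_equiv, piKronecker_mul_piKronecker, hV,
    piKronecker_smul, submatrix_smul]
  rfl

end StarRing

variable [DecidableEq ι]

theorem reducedState_col_bipartitePow [Fintype β] (V : Matrix (α × β) γ ℂ)
    (c : ι → γ) :
    reducedState ((bipartitePow ι V).col c) = piKronecker fun i => reducedState (V.col (c i)) := by
  ext f g
  simp only [reducedState_apply, piKronecker, of_apply, Fintype.prod_sum, Finset.prod_mul_distrib,
    ← star_prod]
  rfl

theorem reducedState_col_bipartitePow_mul_self [Fintype α] [Fintype β] {V : Matrix (α × β) γ ℂ}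
    {r : ℝ} (hV : ∀ c, reducedState (V.col c) * reducedState (V.col c) = r • reducedState (V.col c))
    (c : ι → γ) :
    reducedState ((bipartitePow ι V).col c) * reducedState ((bipartitePow ι V).col c) =
      r ^ Fintype.card ι • reducedState ((bipartitePow ι V).col c) := by
  simp only [reducedState_col_bipartitePow, piKronecker_mul_piKronecker, hV, piKronecker_smul]

end TensorPower

section Antisymmetric

theorem alphaPow_eq_smul_asymPow (d n : ℕ) :
    alphaPow d n = ((d.choose 2 : ℝ) ^ n)⁻¹ • asymPow d n := by
  ext x y
  simp [alphaPow, asymPow, antisymState, Finset.prod_mul_distrib]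

/-- The Levi-Civita symbol `ε_{abc}`, as half a Vandermonde product. -/
def leviCivita (a b c : Fin 3) : ℤ :=
  ((b.val : ℤ) - a.val) * ((c.val : ℤ) - a.val) * ((c.val : ℤ) - b.val) / 2

theorem sum_leviCivita_mul_leviCivita (a b a' b' : Fin 3) :
    ∑ c, leviCivita a b c * leviCivita a' b' c =
      (if a = a' ∧ b = b' then 1 else 0) - if a = b' ∧ b = a' then 1 else 0 := by
  decide +revert +kernel

theorem sum_sum_leviCivita_mul_leviCivita (c c' : Fin 3) :
    ∑ a, ∑ b, leviCivita a b c * leviCivita a b c' = if c = c' then 2 else 0 := by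
  decide +revert +kernel

theorem sum_leviCivita_mul_leviCivita_self (a a' c : Fin 3) :
    ∑ b, leviCivita a b c * leviCivita a' b c = if a = a' then if a = c then 0 else 1 else 0 := by
  decide +revert +kernel

theorem sum_leviCivita_mul_leviCivita_swap (c d c' d' : Fin 3) :
    ∑ a, ∑ b, ∑ a', ∑ b',
      leviCivita a b c * leviCivita a' b' d * (leviCivita a' b c' * leviCivita a b' d') =
      (if c = c' ∧ d = d' then 1 else 0) + if d = c' ∧ c = d' then 1 else 0 := by
  decide +revert +kernel

/-- The isometry `e_c ↦ (1/√2) ∑_{a,b} ε_{abc} e_a ⊗ e_b` of `ℂ³` onto `∧²(ℂ³)`. -/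
def antisymIsometry : Matrix (Fin 3 × Fin 3) (Fin 3) ℂ :=
  of fun x c => ((√2)⁻¹ : ℝ) * leviCivita x.1 x.2 c

theorem antisymIsometry_mul_star (x y : Fin 3 × Fin 3) (c d : Fin 3) :
    antisymIsometry x c * star (antisymIsometry y d) =
      2⁻¹ * (leviCivita x.1 x.2 c * leviCivita y.1 y.2 d) := by
  have hsqrt : (((√2)⁻¹ : ℝ) : ℂ) * ((√2)⁻¹ : ℝ) = 2⁻¹ := by
    rw [← Complex.ofReal_mul, ← mul_inv, Real.mul_self_sqrt zero_le_two, Complex.ofReal_inv,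
      Complex.ofReal_ofNat]
  simp only [antisymIsometry, of_apply, star_mul', star_intCast, Complex.star_def,
    Complex.conj_ofReal]
  rw [mul_mul_mul_comm, hsqrt]

theorem antisymIsometry_mul_conjTranspose :
    antisymIsometry * antisymIsometryᴴ = asymProj 3 := by
  ext x y
  have h := congrArg (Int.cast : ℤ → ℂ) (sum_leviCivita_mul_leviCivita x.1 x.2 y.1 y.2)
  push_cast at h
  simp only [mul_apply, conjTranspose_apply, antisymIsometry_mul_star, ← Finset.mul_sum, h,
    asymProj, of_apply, one_div]

theorem conjTranspose_antisymIsometry_mul_self : antisymIsometryᴴ * antisymIsometry = 1 := by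
  ext c d
  have h := congrArg (Int.cast : ℤ → ℂ) (sum_sum_leviCivita_mul_leviCivita d c)
  push_cast at h
  simp only [mul_apply, conjTranspose_apply, mul_comm (star _), antisymIsometry_mul_star,
    ← Finset.mul_sum, Fintype.sum_prod_type, h, one_apply, eq_comm (a := c)]
  split_ifs <;> simp

theorem reducedState_col_antisymIsometry (c : Fin 3) :
    reducedState (antisymIsometry.col c) = diagonal fun a => if a = c then 0 else 2⁻¹ := by
  ext a a'
  have h := congrArg (Int.cast : ℤ → ℂ) (sum_leviCivita_mul_leviCivita_self a a' c)
  push_cast at h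
  simp only [reducedState_apply, col_apply, antisymIsometry_mul_star, ← Finset.mul_sum, h,
    diagonal_apply]
  split_ifs <;> simp

theorem reducedState_col_antisymIsometry_mul_self (c : Fin 3) :
    reducedState (antisymIsometry.col c) * reducedState (antisymIsometry.col c) =
      (2⁻¹ : ℝ) • reducedState (antisymIsometry.col c) := by
  rw [reducedState_col_antisymIsometry, diagonal_mul_diagonal, ← diagonal_smul]
  congr 1
  ext a
  by_cases h : a = c <;> simp [h]

theorem swapCompression_antisymIsometry :
    swapCompression antisymIsometry =
      (4⁻¹ : ℝ) • (1 + Equiv.Perm.permMatrix ℂ (Equiv.prodComm (Fin 3) (Fin 3))) := by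
  ext p q
  have hterm (x y z w : Fin 3 × Fin 3) :
      star (antisymIsometry x p.1 * antisymIsometry y p.2) *
        (antisymIsometry z q.1 * antisymIsometry w q.2) =
      4⁻¹ * (leviCivita x.1 x.2 p.1 * leviCivita y.1 y.2 p.2 *
        (leviCivita z.1 z.2 q.1 * leviCivita w.1 w.2 q.2)) := by
    rw [star_mul', mul_mul_mul_comm, mul_comm (star _), mul_comm (star _),
      antisymIsometry_mul_star, antisymIsometry_mul_star]
    ring
  have h := congrArg (Int.cast : ℤ → ℂ) (sum_leviCivita_mul_leviCivita_swap p.1 p.2 q.1 q.2)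
  push_cast at h
  simp only [swapCompression, mul_apply, conjTranspose_apply, submatrix_apply, kroneckerMap_apply,
    swapFst, id, Fintype.sum_prod_type, hterm, ← Finset.mul_sum, h]
  simp [one_apply, PEquiv.toMatrix_apply, Prod.ext_iff, and_comm, eq_comm, mul_add]

theorem swapCompression_antisymIsometry_mul_self :
    swapCompression antisymIsometry * swapCompression antisymIsometry =
      (2⁻¹ : ℝ) • swapCompression antisymIsometry := by
  have hF : Equiv.Perm.permMatrix ℂ (Equiv.prodComm (Fin 3) (Fin 3)) *
      Equiv.Perm.permMatrix ℂ (Equiv.prodComm (Fin 3) (Fin 3)) = 1 := by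
    rw [← permMatrix_mul]
    exact permMatrix_one
  rw [swapCompression_antisymIsometry, smul_mul_smul_comm, add_mul, mul_add, mul_add, hF, smul_smul]
  simp only [one_mul, mul_one, ← two_smul ℝ, add_comm (Equiv.Perm.permMatrix _ _)]
  module

theorem alphaPow_three (n : ℕ) :
    alphaPow 3 n = (Fintype.card (Fin n → Fin 3) : ℝ)⁻¹ •
      (bipartitePow (Fin n) antisymIsometry * (bipartitePow (Fin n) antisymIsometry)ᴴ) := by
  rw [alphaPow_eq_smul_asymPow, bipartitePow_mul_conjTranspose, antisymIsometry_mul_conjTranspose,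
    Fintype.card_fun, Fintype.card_fin, Fintype.card_fin, Nat.cast_pow]
  rfl

end Antisymmetric

/-- For every integer `n ≥ 1`, `E_F(α₃^{⊗n}) = n` (Yura's result). -/
theorem EoF_alphaPow_three (n : ℕ) (hn : 1 ≤ n) :
    EoF (alphaPow 3 n) = (n : ℝ) := by
  have hisom := conjTranspose_bipartitePow_mul_self (ι := Fin n)
    conjTranspose_antisymIsometry_mul_self
  have hswap := swapCompression_bipartitePow_mul_self (ι := Fin n)
    swapCompression_antisymIsometry_mul_self
  have hcol := reducedState_col_bipartitePow_mul_self (ι := Fin n)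
    reducedState_col_antisymIsometry_mul_self
  rw [alphaPow_three, EoF_smul_mul_conjTranspose (by positivity) hisom hswap hcol,
    Fintype.card_fin, inv_pow, Real.logb_inv, neg_neg, Real.logb_pow,
    Real.logb_self_eq_one one_lt_two, mul_one]

end
end

section
/- Let n ≥ 1 be an integer, let t : {0,1} → ℝ be given by t(0) = −1, t(1) = 1/2, and let T be the 2×2 real matrix with rows indexed by x ∈ {0,1} and columns by y ∈ {0,1} given by T(0,0) = −2, T(0,1) = 1, T(1,0) = 1, T(1,1) = 1. Then for every function p : {0,1}^n → ℝ satisfying (i) p(y) ≥ 0 for all y ∈ {0,1}^n, (ii) ∑_{y∈{0,1}^n} p(y) ≤ 1, and (iii) for all x ∈ {0,1}^n, ∑_{y∈{0,1}^n} (∏_{i=1}^n T(x_i, y_i)) p(y) ≥ 0, the objective value satisfies ∑_{y∈{0,1}^n} (∏_{i=1}^n t(y_i)) p(y) ≤ (3/4)^n. That is, the optimum ζ_n of this linear programme is at most (3/4)^n. -/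
open scoped BigOperators
open Classical
open scoped ComplexOrder

noncomputable section

/-!
The objective `t^{⊗n}` is `(1/2)^n` times the row of `T^{⊗n}` indexed by the zero string. Put
`c = (1/2, 1/4)`: since `c^{⊗n} ≥ 0` and the constraint values `T^{⊗n} p` are nonnegative, adding
the remaining rows with weights `c^{⊗n}` can only increase the objective, which becomes
`(c^{⊗n} T^{⊗n}) p = (c T)^{⊗n} p`. As `c T = (-3/4, 3/4)`, each entry of `(c T)^{⊗n}` is
`± (3/4)^n`, while `p` is nonnegative with total mass at most one.
-/

open Matrix

section Order

variable {m n R : Type*} [Fintype m] [Fintype n] [Semiring R] [PartialOrder R] [IsOrderedRing R]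

theorem dotProduct_le_of_sum_le_one {v p : n → R} {r : R} (hr : 0 ≤ r) (hp : 0 ≤ p)
    (hsum : ∑ y, p y ≤ 1) (hv : ∀ y, v y ≤ r) : v ⬝ᵥ p ≤ r :=
  calc
    v ⬝ᵥ p ≤ (fun _ ↦ r) ⬝ᵥ p := dotProduct_le_dotProduct_of_nonneg_right hv hp
    _ = r * ∑ y, p y := (Finset.mul_sum ..).symm
    _ ≤ r := mul_le_of_le_one_right hr hsum

theorem smul_row_dotProduct_le_vecMul_dotProduct (A : Matrix m n R) {c : m → R} {p : n → R}
    (hc : 0 ≤ c) (hA : 0 ≤ A *ᵥ p) (x : m) : (c x • A.row x) ⬝ᵥ p ≤ (c ᵥ* A) ⬝ᵥ p :=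
  calc
    (c x • A.row x) ⬝ᵥ p = c x * (A *ᵥ p) x := smul_dotProduct ..
    _ ≤ c ⬝ᵥ A *ᵥ p :=
      Finset.single_le_sum (f := fun x ↦ c x * (A *ᵥ p) x)
        (fun x _ ↦ mul_nonneg (hc x) (hA x)) (Finset.mem_univ x)
    _ = (c ᵥ* A) ⬝ᵥ p := dotProduct_mulVec ..

end Order

section TensorPower

variable {α β R : Type*} (ι : Type*) [Fintype ι]

/-- The tensor power `v^{⊗ι}` of a vector, with coordinates indexed by strings `ι → α`. -/
def tensorPow [CommMonoid R] (v : α → R) : (ι → α) → R :=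
  fun x ↦ ∏ i, v (x i)

/-- The Kronecker power `A^{⊗ι}` of a matrix, with rows and columns indexed by strings. -/
def kroneckerPow [CommMonoid R] (A : Matrix α β R) : Matrix (ι → α) (ι → β) R :=
  Matrix.of fun x y ↦ ∏ i, A (x i) (y i)

theorem tensorPow_nonneg [CommSemiring R] [PartialOrder R] [IsOrderedRing R] {v : α → R}
    (hv : 0 ≤ v) : 0 ≤ tensorPow ι v :=
  fun x ↦ Finset.prod_nonneg fun i _ ↦ hv (x i)

theorem tensorPow_le_pow_card [CommRing R] [LinearOrder R] [IsStrictOrderedRing R] {v : α → R}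
    {r : R} (hv : ∀ a, |v a| ≤ r) (x : ι → α) : tensorPow ι v x ≤ r ^ Fintype.card ι :=
  calc
    tensorPow ι v x ≤ ∏ i, |v (x i)| := (le_abs_self _).trans_eq (Finset.abs_prod ..)
    _ ≤ ∏ _i : ι, r := Finset.prod_le_prod (fun _ _ ↦ abs_nonneg _) fun i _ ↦ hv (x i)
    _ = r ^ Fintype.card ι := by rw [Finset.prod_const, Finset.card_univ]

theorem tensorPow_smul_row [CommMonoid R] (c : α → R) (A : Matrix α β R) (a : α) :
    tensorPow ι (c a • A.row a) = tensorPow ι c (fun _ ↦ a) • (kroneckerPow ι A).row fun _ ↦ a :=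
  funext fun _ ↦ Finset.prod_mul_distrib

theorem tensorPow_vecMul_kroneckerPow [DecidableEq ι] [Fintype α] [CommSemiring R] (c : α → R)
    (A : Matrix α β R) : tensorPow ι c ᵥ* kroneckerPow ι A = tensorPow ι (c ᵥ* A) := by
  ext y
  calc
    ∑ x : ι → α, (∏ i, c (x i)) * ∏ i, A (x i) (y i) =
        ∑ x : ι → α, ∏ i, c (x i) * A (x i) (y i) := by simp only [Finset.prod_mul_distrib]
    _ = ∏ i, ∑ a, c a * A a (y i) := (Fintype.prod_sum fun i a ↦ c a * A a (y i)).symm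

end TensorPower

theorem lp_value_le_general {ι α β R : Type*} [Fintype ι] [DecidableEq ι] [Fintype α] [Fintype β]
    [CommRing R] [LinearOrder R] [IsStrictOrderedRing R] {T : Matrix α β R} {t : β → R}
    {c : α → R} {a : α} {r : R} (hc : 0 ≤ c) (ht : t = c a • T.row a) (hr : 0 ≤ r)
    (hcT : ∀ b, |(c ᵥ* T) b| ≤ r) {p : (ι → β) → R} (hp : 0 ≤ p) (hsum : ∑ y, p y ≤ 1)
    (hT : 0 ≤ kroneckerPow ι T *ᵥ p) : tensorPow ι t ⬝ᵥ p ≤ r ^ Fintype.card ι :=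
  calc
    tensorPow ι t ⬝ᵥ p =
        (tensorPow ι c (fun _ ↦ a) • (kroneckerPow ι T).row fun _ ↦ a) ⬝ᵥ p := by
      rw [ht, tensorPow_smul_row]
    _ ≤ (tensorPow ι c ᵥ* kroneckerPow ι T) ⬝ᵥ p :=
      smul_row_dotProduct_le_vecMul_dotProduct _ (tensorPow_nonneg ι hc) hT _
    _ = tensorPow ι (c ᵥ* T) ⬝ᵥ p := by rw [tensorPow_vecMul_kroneckerPow]
    _ ≤ r ^ Fintype.card ι :=
      dotProduct_le_of_sum_le_one (pow_nonneg hr _) hp hsum (tensorPow_le_pow_card ι hcT)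

/-- the optimum `ζ_n` of the two-symbol linear programme with constraint
matrix `T^{⊗n}` and objective `t^{⊗n}` is at most `(3/4)^n`. -/
theorem lp_value_le (n : ℕ) (hn : 1 ≤ n)
    (p : (Fin n → Fin 2) → ℝ)
    (hpos : ∀ y, 0 ≤ p y)
    (hsum : ∑ y, p y ≤ 1)
    (hconstr : ∀ x : Fin n → Fin 2,
      0 ≤ ∑ y, (∏ i, (!![(-2 : ℝ), 1; 1, 1]) (x i) (y i)) * p y) :
    ∑ y, (∏ i, (![(-1 : ℝ), 1 / 2]) (y i)) * p y ≤ (3 / 4 : ℝ) ^ n := by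
  have hc : (0 : Fin 2 → ℝ) ≤ ![1 / 2, 1 / 4] := by
    simp [Pi.le_def, Fin.forall_fin_two]
  have ht : (![-1, 1 / 2] : Fin 2 → ℝ) =
      (![1 / 2, 1 / 4] : Fin 2 → ℝ) 0 • !![(-2 : ℝ), 1; 1, 1].row 0 := by
    ext b; fin_cases b <;> norm_num
  have hcT : (![1 / 2, 1 / 4] : Fin 2 → ℝ) ᵥ* !![(-2 : ℝ), 1; 1, 1] = ![-3 / 4, 3 / 4] := by
    ext b; fin_cases b <;> norm_num [vecMul, dotProduct]
  have hcT_abs : ∀ b, |(![-3 / 4, 3 / 4] : Fin 2 → ℝ) b| ≤ 3 / 4 := by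
    simp [Fin.forall_fin_two, abs_div]
  exact (lp_value_le_general hc ht (by norm_num) (hcT ▸ hcT_abs) hpos hsum hconstr).trans_eq
    (by rw [Fintype.card_fin])

end
end
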